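/- Let k be a field of prime characteristic p and X = {1, 2} with 1 ≺ 2. Then in the free algebra k⟨X⟩, for every 1 ≤ m ≤ p−1 the element SH_{m,p−m}(E(2), E(1)) lies in the k-linear span of { E(α) : α a Lyndon word over X with α(2) = m and α(1) = p−m }. Consequently (E(1)+E(2))^p − E(1)^p − E(2)^p lies in the k-linear span of { E(α) : α a Lyndon word over X of length p }. -/

import Mathlib

/-- A nonempty word over a linearly ordered alphabet is a Lyndon word if it is
strictly lexicographically smaller than every nontrivial rotation of itself
(vacuously true for single letters). -/
def IsLyndon {X : Type*} [LinearOrder X] (w : List X) : Prop :=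
  w ≠ [] ∧ ∀ u v : List X, u ≠ [] → v ≠ [] → w = u ++ v → List.Lex (· < ·) w (v ++ u)

/-- The shuffle type polynomials `SH_{i,j}(u,v)`: the sum of all products of `i`
copies of `u` and `j` copies of `v`. -/
def SH {A : Type*} [Ring A] (u v : A) : ℕ → ℕ → A
  | 0, 0 => 1
  | i + 1, 0 => u * SH u v i 0
  | 0, j + 1 => v * SH u v 0 j
  | i + 1, j + 1 => u * SH u v i (j + 1) + v * SH u v (i + 1) j

/-!
Jacobson's formula: for a central variable `t`, the derivative of `(t * a + b) ^ p` with respect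
to `t` is `ad (t * a + b) ^ (p - 1)` applied to `a`, because left and right multiplication commute
and `(x - y) ^ (p - 1) = ∑ x ^ i * y ^ (p - 1 - i)` for commuting `x`, `y` in characteristic `p`.
Comparing coefficients of `t ^ (m - 1)` writes `m • SH a b m (p - m)` as a sum of iterated
commutators of `a` and `b`, and `m` is a unit.

It remains to see that the span of the `E α` is closed under commutators, compatibly with the
multidegree. For Lyndon words `a < b`, either `a ++ b` has standard factorization `(a, b)`, or the
standard factorization `(l, r)` of `a` satisfies `r < b` and the Jacobi identity rewrites
`⁅⁅E l, E r⁆, E b⁆` in terms of `⁅E l, ⁅E r, E b⁆⁆` and `⁅E r, ⁅E l, E b⁆⁆`. This terminates because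
`⁅E a, E b⁆` only involves words smaller than `b`.
-/

section ProperSuffixes

variable {X : Type*} {l r v w : List X}

/-- The nonempty suffixes of `w` other than `w` itself. -/
def properSuffixes (w : List X) : Set (List X) :=
  {v | v ≠ [] ∧ ∃ u, u ≠ [] ∧ u ++ v = w}

theorem append_mem_properSuffixes (hv : v ∈ properSuffixes l) (r : List X) :
    v ++ r ∈ properSuffixes (l ++ r) := by
  obtain ⟨hv, u, hu, rfl⟩ := hv
  exact ⟨by simp [hv], u, hu, by simp⟩

theorem properSuffixes_subset_properSuffixes (hv : v ∈ properSuffixes w) :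
    properSuffixes v ⊆ properSuffixes w := by
  rintro t ⟨ht, s, -, rfl⟩
  obtain ⟨-, u, hu, rfl⟩ := hv
  exact ⟨ht, u ++ s, by simp [hu], by simp⟩

theorem ne_of_mem_properSuffixes (hv : v ∈ properSuffixes w) : w ≠ v := by
  obtain ⟨-, u, hu, rfl⟩ := hv
  simpa using hu

theorem mem_properSuffixes_append (hv : v ∈ properSuffixes (l ++ r)) :
    (∃ s ∈ properSuffixes l, v = s ++ r) ∨ v = r ∨ v ∈ properSuffixes r := by
  obtain ⟨hv, u, hu, huv⟩ := hv
  rcases List.append_eq_append_iff.1 huv with ⟨s, rfl, rfl⟩ | ⟨s, rfl, rfl⟩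
  · rcases eq_or_ne s [] with rfl | hs
    · exact Or.inr (Or.inl rfl)
    · exact Or.inl ⟨s, ⟨hs, u, hu, rfl⟩, rfl⟩
  · rcases eq_or_ne s [] with rfl | hs
    · exact Or.inr (Or.inl rfl)
    · exact Or.inr (Or.inr ⟨hv, s, hs, rfl⟩)

theorem finite_properSuffixes (w : List X) : (properSuffixes w).Finite :=
  w.tails.finite_toSet.subset fun v ⟨_, u, _, huv⟩ => (List.mem_tails v w).2 ⟨u, huv⟩

theorem finite_setOf_subperm (w : List X) : {v : List X | v.Subperm w}.Finite :=
  (w.sublists.flatMap List.permutations).finite_toSet.subset fun _ ⟨s, hsv, hsw⟩ =>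
    List.mem_flatMap.2 ⟨s, List.mem_sublists.2 hsw, List.mem_permutations.2 hsv.symm⟩

end ProperSuffixes

section Lyndon

variable {X : Type*} [LinearOrder X] {a b l r v w : List X}

theorem append_lt_append_of_not_prefix (h : a < b) (hab : ¬ a <+: b) (v w : List X) :
    a ++ v < b ++ w := by
  induction a generalizing b with
  | nil => exact absurd List.nil_prefix hab
  | cons c a ih =>
    cases b with
    | nil => exact absurd h (List.not_lt_nil _)
    | cons d b =>
      rw [List.cons_append, List.cons_append, List.cons_lt_cons_iff]
      rcases List.cons_lt_cons_iff.1 h with hcd | ⟨rfl, hlt⟩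
      · exact Or.inl hcd
      · exact Or.inr ⟨rfl, ih hlt fun hp => hab (List.cons_prefix_cons.2 ⟨rfl, hp⟩)⟩

theorem append_lt_append_of_length_le (h : a < b) (hlen : b.length ≤ a.length) (v w : List X) :
    a ++ v < b ++ w :=
  append_lt_append_of_not_prefix h (fun hp => h.ne (hp.eq_of_length_le hlen)) v w

theorem append_lt_append_left_iff (v : List X) : v ++ a < v ++ b ↔ a < b :=
  StrictMono.lt_iff_lt (f := (v ++ ·)) fun _ _ => List.append_left_lt

theorem lt_append_of_ne_nil (a : List X) (hb : b ≠ []) : a < a ++ b := by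
  obtain ⟨c, b, rfl⟩ := List.exists_cons_of_ne_nil hb
  simpa using (append_lt_append_left_iff a).2 (List.nil_lt_cons c b)

theorem lt_of_mem_properSuffixes_of_lt_rotations {w v : List X}
    (h : ∀ u v : List X, u ≠ [] → v ≠ [] → w = u ++ v → w < v ++ u)
    (hv : v ∈ properSuffixes w) : w < v := by
  obtain ⟨hv0, u, hu, huv⟩ := id hv
  have hrot : w < v ++ u := h u v hu hv0 huv.symm
  refine (ne_of_mem_properSuffixes hv).lt_or_gt.resolve_right fun hvw => ?_
  by_cases hp : v <+: w
  · obtain ⟨t, ht⟩ := hp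
    have hlen : t.length = u.length := by
      have := congrArg List.length (ht.trans huv.symm)
      simp only [List.length_append] at this
      omega
    have ht0 : t ≠ [] := List.ne_nil_of_length_pos (hlen ▸ List.length_pos_iff.2 hu)
    have htu : t < u := (append_lt_append_left_iff v).1 (ht ▸ hrot)
    have hlt : t ++ v < w := huv ▸ append_lt_append_of_length_le htu hlen.ge v v
    exact lt_asymm hlt (h v t hv0 ht0 ht.symm)
  · exact lt_asymm hrot (by simpa using append_lt_append_of_not_prefix hvw hp u [])

theorem isLyndon_iff_forall_lt_properSuffixes :
    IsLyndon w ↔ w ≠ [] ∧ ∀ v ∈ properSuffixes w, w < v := by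
  refine and_congr_right fun _ =>
    ⟨fun h _ hv => lt_of_mem_properSuffixes_of_lt_rotations h hv, fun h u v hu hv huv => ?_⟩
  exact (h v ⟨hv, u, hu, huv.symm⟩).trans (lt_append_of_ne_nil v hu)

theorem isLyndon_singleton (x : X) : IsLyndon [x] := by
  refine ⟨List.cons_ne_nil x [], fun u v hu hv huv => ?_⟩
  rcases List.singleton_eq_append_iff.1 huv with ⟨rfl, -⟩ | ⟨-, rfl⟩ <;> contradiction

theorem exists_isLeast_properSuffixes (hw : (properSuffixes w).Nonempty) :
    ∃ r, IsLeast (properSuffixes w) r :=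
  let ⟨r, hr, hmin⟩ := Set.exists_min_image _ id (finite_properSuffixes w) hw
  ⟨r, hr, hmin⟩

/-- `w = l ++ r` is the standard factorization of the word `w`: the factor `r` is the longest
proper suffix of `w` that is a Lyndon word. -/
def IsStandardFactorization (l r : List X) : Prop :=
  l ≠ [] ∧ IsLyndon r ∧
    ∀ d u : List X, l ++ r = u ++ d → u ≠ [] → IsLyndon d → d.length ≤ r.length

namespace IsLyndon

theorem lt_of_mem_properSuffixes (hw : IsLyndon w) (hv : v ∈ properSuffixes w) : w < v :=
  (isLyndon_iff_forall_lt_properSuffixes.1 hw).2 v hv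

theorem append_lt (ha : a ≠ []) (hb : IsLyndon b) (hab : a < b) : a ++ b < b := by
  by_cases hp : a <+: b
  · obtain ⟨t, rfl⟩ := hp
    have ht : t ≠ [] := by
      rintro rfl
      simp at hab
    exact (append_lt_append_left_iff a).2 (hb.lt_of_mem_properSuffixes ⟨ht, a, ha, rfl⟩)
  · simpa using append_lt_append_of_not_prefix hab hp b []

theorem append (ha : IsLyndon a) (hb : IsLyndon b) (hab : a < b) : IsLyndon (a ++ b) := by
  have hlt : a ++ b < b := append_lt ha.1 hb hab
  refine isLyndon_iff_forall_lt_properSuffixes.2 ⟨by simp [ha.1], fun v hv => ?_⟩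
  rcases mem_properSuffixes_append hv with ⟨s, hs, rfl⟩ | rfl | hv
  · have hlen : s.length ≤ a.length := by
      obtain ⟨-, u, -, rfl⟩ := hs
      simp
    exact append_lt_append_of_length_le (ha.lt_of_mem_properSuffixes hs) hlen b b
  · exact hlt
  · exact hlt.trans (hb.lt_of_mem_properSuffixes hv)

theorem of_isLeast_properSuffixes (hr : IsLeast (properSuffixes w) r) : IsLyndon r :=
  isLyndon_iff_forall_lt_properSuffixes.2 ⟨hr.1.1, fun _ hv =>
    (hr.2 (properSuffixes_subset_properSuffixes hr.1 hv)).lt_of_ne (ne_of_mem_properSuffixes hv)⟩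

theorem left_of_isLeast_properSuffixes (h : IsLyndon (l ++ r)) (hl : l ≠ [])
    (hr : IsLeast (properSuffixes (l ++ r)) r) : IsLyndon l := by
  refine isLyndon_iff_forall_lt_properSuffixes.2 ⟨hl, fun t ht => ?_⟩
  have htr : l ++ r < t ++ r := h.lt_of_mem_properSuffixes (append_mem_properSuffixes ht r)
  refine (ne_of_mem_properSuffixes ht).lt_or_gt.resolve_right fun htl => ?_
  by_cases hp : t <+: l
  · obtain ⟨s, rfl⟩ := hp
    have hsr : s ++ r < r := (append_lt_append_left_iff t).1 (by simpa using htr)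
    exact hsr.not_ge (hr.2 ⟨by simp [hr.1.1], t, ht.1, by simp⟩)
  · exact lt_asymm htr (append_lt_append_of_not_prefix htl hp r r)

theorem isStandardFactorization (hr : IsLyndon r) (hl : l ≠ [])
    (h : ∀ s ∈ properSuffixes l, r ≤ s ++ r) : IsStandardFactorization l r := by
  refine ⟨hl, hr, fun d u hud hu hd => ?_⟩
  rcases mem_properSuffixes_append ⟨hd.1, u, hu, hud.symm⟩ with ⟨s, hs, rfl⟩ | rfl | hdr
  · exact absurd (h s hs) (hd.lt_of_mem_properSuffixes ⟨hr.1, s, hs.1, rfl⟩).not_ge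
  · exact le_rfl
  · obtain ⟨-, t, -, rfl⟩ := hdr
    simp

theorem exists_isStandardFactorization (hw : IsLyndon w) (h : (properSuffixes w).Nonempty) :
    ∃ l r, l ++ r = w ∧ IsLyndon l ∧ IsStandardFactorization l r ∧
      r ∈ lowerBounds (properSuffixes w) := by
  obtain ⟨r, hr⟩ := exists_isLeast_properSuffixes h
  obtain ⟨-, l, hl, rfl⟩ := hr.1
  refine ⟨l, r, rfl, hw.left_of_isLeast_properSuffixes hl hr, ?_, hr.2⟩
  exact (of_isLeast_properSuffixes hr).isStandardFactorization hl fun s hs =>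
    hr.2 (append_mem_properSuffixes hs r)

end IsLyndon

end Lyndon

section Brackets

attribute [local instance] LieRing.ofAssociativeRing

variable (k : Type*) [CommRing k] {A : Type*} [Ring A] [Algebra k A]
variable {X : Type*} [LinearOrder X] {E : List X → A} {a b c d w : List X}

/-- The defining recursion of the Lyndon–Shirshov elements: `E` of a Lyndon word is the commutator
of its values on the two standard factors. The values of `E` on letters are left arbitrary, so
that `E` may be the image of the Lyndon–Shirshov basis in any algebra. -/
def IsLyndonShirshov (E : List X → A) : Prop :=
  ∀ l r : List X, IsLyndon (l ++ r) → IsStandardFactorization l r → E (l ++ r) = ⁅E l, E r⁆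

/-- The span of the elements `E α` for the Lyndon words `α` in `S`. -/
def lyndonSpan (E : List X → A) (S : Set (List X)) : Submodule k A :=
  Submodule.span k {x | ∃ α, IsLyndon α ∧ α ∈ S ∧ x = E α}

variable {k}

theorem IsLyndon.mem_lyndonSpan {S : Set (List X)} (ha : IsLyndon a) (haS : a ∈ S) :
    E a ∈ lyndonSpan k E S :=
  Submodule.subset_span ⟨a, ha, haS, rfl⟩

theorem lyndonSpan_mono {S T : Set (List X)} (h : S ⊆ T) : lyndonSpan k E S ≤ lyndonSpan k E T := by
  refine Submodule.span_mono ?_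
  rintro _ ⟨α, hα, hαS, rfl⟩
  exact ⟨α, hα, h hαS, rfl⟩

theorem lie_mem_of_mem_lyndonSpan {S : Set (List X)} {V : Submodule k A} {x y : A}
    (h : ∀ α, IsLyndon α → α ∈ S → ⁅x, E α⁆ ∈ V) (hy : y ∈ lyndonSpan k E S) : ⁅x, y⁆ ∈ V := by
  suffices lyndonSpan k E S ≤ V.comap (LieAlgebra.ad k A x : A →ₗ[k] A) from this hy
  refine Submodule.span_le.2 ?_
  rintro _ ⟨α, hα, hαS, rfl⟩
  exact h α hα hαS

theorem lie_mem_lyndonSpan_lt_of_mem_lowerBounds (hE : IsLyndonShirshov E) (ha : IsLyndon a)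
    (hb : IsLyndon b) (hab : a < b) (h : b ∈ lowerBounds (properSuffixes a)) :
    ⁅E a, E b⁆ ∈ lyndonSpan k E {α | α.Perm (a ++ b) ∧ α < b} := by
  have hstd : IsStandardFactorization a b := hb.isStandardFactorization ha.1 fun s hs =>
    (h hs).trans (lt_append_of_ne_nil s hb.1).le
  rw [← hE a b (ha.append hb hab) hstd]
  exact (ha.append hb hab).mem_lyndonSpan ⟨List.Perm.refl _, IsLyndon.append_lt ha.1 hb hab⟩

theorem lie_mem_lyndonSpan_lt_of_lt_of_lt
    (ih : ∀ b' < b, ∀ a', IsLyndon a' → IsLyndon b' → a' < b' → (a' ++ b').Perm w →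
      ⁅E a', E b'⁆ ∈ lyndonSpan k E {α | α.Perm w ∧ α < b'})
    (hc : IsLyndon c) (hd : IsLyndon d) (hcb : c < b) (hdb : d < b) (hcd : (c ++ d).Perm w) :
    ⁅E c, E d⁆ ∈ lyndonSpan k E {α | α.Perm w ∧ α < b} := by
  have weaken {b'} (hb' : b' < b) : lyndonSpan k E {α | α.Perm w ∧ α < b'} ≤
      lyndonSpan k E {α | α.Perm w ∧ α < b} :=
    lyndonSpan_mono fun _ hα => ⟨hα.1, hα.2.trans hb'⟩
  rcases lt_trichotomy c d with hlt | rfl | hlt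
  · exact weaken hdb (ih d hdb c hc hd hlt hcd)
  · simp
  · rw [← lie_skew, neg_mem_iff]
    exact weaken hcb (ih c hcb d hd hc hlt (List.perm_append_comm.trans hcd))

theorem lie_lie_mem_lyndonSpan_lt
    (ih_lt : ∀ b' < b, ∀ a', IsLyndon a' → IsLyndon b' → a' < b' → (a' ++ b').Perm w →
      ⁅E a', E b'⁆ ∈ lyndonSpan k E {α | α.Perm w ∧ α < b'})
    (hdb : ⁅E d, E b⁆ ∈ lyndonSpan k E {α | α.Perm (d ++ b) ∧ α < b})
    (hc : IsLyndon c) (hcb : c < b) (hcd : (c ++ (d ++ b)).Perm w) :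
    ⁅E c, ⁅E d, E b⁆⁆ ∈ lyndonSpan k E {α | α.Perm w ∧ α < b} :=
  lie_mem_of_mem_lyndonSpan (fun _ hα hαb => lie_mem_lyndonSpan_lt_of_lt_of_lt ih_lt hc hα hcb
    hαb.2 ((hαb.1.append_left c).trans hcd)) hdb

theorem lie_mem_lyndonSpan_lt_of_forall (hE : IsLyndonShirshov E)
    (ih_length : ∀ a', IsLyndon a' → a' < b → a'.length < a.length →
      ⁅E a', E b⁆ ∈ lyndonSpan k E {α | α.Perm (a' ++ b) ∧ α < b})
    (ih_lt : ∀ b' < b, ∀ a', IsLyndon a' → IsLyndon b' → a' < b' → (a' ++ b').Perm (a ++ b) →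
      ⁅E a', E b'⁆ ∈ lyndonSpan k E {α | α.Perm (a ++ b) ∧ α < b'})
    (ha : IsLyndon a) (hb : IsLyndon b) (hab : a < b) :
    ⁅E a, E b⁆ ∈ lyndonSpan k E {α | α.Perm (a ++ b) ∧ α < b} := by
  by_cases hmin : b ∈ lowerBounds (properSuffixes a)
  · exact lie_mem_lyndonSpan_lt_of_mem_lowerBounds hE ha hb hab hmin
  obtain ⟨v, hv, hvb⟩ : ∃ v ∈ properSuffixes a, v < b := by
    simpa [mem_lowerBounds] using hmin
  obtain ⟨l, r, rfl, hl, hstd, hr⟩ := ha.exists_isStandardFactorization ⟨v, hv⟩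
  have hrb : r < b := (hr hv).trans_lt hvb
  have hlb : l < b := (lt_append_of_ne_nil l hstd.2.1.1).trans hab
  have hl_len := List.length_pos_iff.2 hl.1
  have hr_len := List.length_pos_iff.2 hstd.2.1.1
  have hlb_mem := ih_length l hl hlb (by rw [List.length_append]; omega)
  have hrb_mem := ih_length r hstd.2.1 hrb (by rw [List.length_append]; omega)
  rw [hE l r ha hstd, lie_lie]
  refine sub_mem (lie_lie_mem_lyndonSpan_lt ih_lt hrb_mem hl hlb ?_)
    (lie_lie_mem_lyndonSpan_lt ih_lt hlb_mem hstd.2.1 hrb ?_)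
  · rw [List.append_assoc]
  · rw [List.append_assoc]
    exact List.perm_append_comm_assoc r l b

-- The induction is on the length of `a ++ b`, then on `b` among the finitely many words that can
-- be formed from letters of `a ++ b`.
theorem lie_mem_lyndonSpan_lt (hE : IsLyndonShirshov E) (ha : IsLyndon a) (hb : IsLyndon b)
    (hab : a < b) : ⁅E a, E b⁆ ∈ lyndonSpan k E {α | α.Perm (a ++ b) ∧ α < b} := by
  induction hn : (a ++ b).length using Nat.strong_induction_on generalizing a b with
  | _ n ih_length =>
  have mono {v₁ v₂ c : List X} (h : v₁.Perm v₂) :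
      lyndonSpan k E {α | α.Perm v₁ ∧ α < c} ≤ lyndonSpan k E {α | α.Perm v₂ ∧ α < c} :=
    lyndonSpan_mono fun _ hα => ⟨hα.1.trans h, hα.2⟩
  have hwf : {v : List X | v.Subperm (a ++ b)}.WellFoundedOn (· < ·) :=
    (finite_setOf_subperm (a ++ b)).wellFoundedOn
  refine hwf.induction (x := b) (P := fun b' => ∀ a', IsLyndon a' → IsLyndon b' → a' < b' →
      (a' ++ b').Perm (a ++ b) → ⁅E a', E b'⁆ ∈ lyndonSpan k E {α | α.Perm (a ++ b) ∧ α < b'})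
    (List.sublist_append_right a b).subperm ?_ a ha hb hab (List.Perm.refl _)
  intro b' _ ih_lt a' ha' hb' hab' hperm
  have hlen : (a' ++ b').length = n := hperm.length_eq.trans hn
  refine mono hperm
    (lie_mem_lyndonSpan_lt_of_forall hE (fun c hc hcb hca => ?_) ?_ ha' hb' hab')
  · refine ih_length _ ?_ hc hb' hcb rfl
    simpa [← hlen] using hca
  · intro d hd c hc hd' hcd hcdw
    have hsub : d.Subperm (a ++ b) :=
      (List.sublist_append_right c d).subperm.trans (hcdw.trans hperm).subperm
    exact mono hperm.symm (ih_lt d hsub hd c hc hd' hcd (hcdw.trans hperm))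

theorem IsLyndon.lie_mem_lyndonSpan (hE : IsLyndonShirshov E) (ha : IsLyndon a)
    (hb : IsLyndon b) : ⁅E a, E b⁆ ∈ lyndonSpan k E {α | α.Perm (a ++ b)} := by
  rcases lt_trichotomy a b with hlt | rfl | hlt
  · exact lyndonSpan_mono (fun _ hα => hα.1) (lie_mem_lyndonSpan_lt hE ha hb hlt)
  · simp
  · rw [← lie_skew, neg_mem_iff]
    exact lyndonSpan_mono (fun _ hα => hα.1.trans List.perm_append_comm)
      (lie_mem_lyndonSpan_lt hE hb ha hlt)

theorem IsLyndon.lie_mem_lyndonSpan_of_mem {x : A} (hE : IsLyndonShirshov E) (ha : IsLyndon a)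
    (hx : x ∈ lyndonSpan k E {α | α.Perm w}) : ⁅E a, x⁆ ∈ lyndonSpan k E {α | α.Perm (a ++ w)} :=
  lie_mem_of_mem_lyndonSpan (fun _ hα hαw =>
    lyndonSpan_mono (fun _ hβ => hβ.trans (hαw.append_left a)) (ha.lie_mem_lyndonSpan hE hα)) hx

end Brackets

section Shuffle

open Finset Polynomial

variable {A : Type*} [Ring A]

theorem SH_zero_right (a b : A) (n : ℕ) : SH a b n 0 = a ^ n := by
  induction n with
  | zero => simp [SH]
  | succ n ih => rw [SH, ih, pow_succ']

theorem SH_zero_left (a b : A) (n : ℕ) : SH a b 0 n = b ^ n := by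
  induction n with
  | zero => simp [SH]
  | succ n ih => rw [SH, ih, pow_succ']

theorem add_pow_eq_sum_SH (a b : A) (n : ℕ) :
    (a + b) ^ n = ∑ ij ∈ antidiagonal n, SH a b ij.1 ij.2 := by
  induction n with
  | zero => simp [SH]
  | succ n ih =>
    cases n with
    | zero => simp [Finset.Nat.antidiagonal_succ, SH, add_comm]
    | succ n =>
      rw [pow_succ', ih, add_mul, mul_sum, mul_sum]
      conv_lhs => rw [Finset.Nat.sum_antidiagonal_succ', Finset.Nat.sum_antidiagonal_succ]
      rw [Finset.Nat.sum_antidiagonal_succ, Finset.Nat.sum_antidiagonal_succ']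
      simp only [SH, sum_add_distrib]
      abel

theorem SH_C_mul_X (a b : A) (i j : ℕ) :
    SH (C a * X) (C b) i j = monomial i (SH a b i j) := by
  induction i, j using SH.induct with
  | case1 => simp [SH]
  | case2 i ih => simp [SH, ih, mul_assoc, X_mul_monomial, C_mul_monomial]
  | case3 j ih => simp [SH, ih]
  | case4 i j ih₁ ih₂ => simp [SH, ih₁, ih₂, mul_assoc, X_mul_monomial, C_mul_monomial]

theorem coeff_sum_antidiagonal_monomial {R : Type*} [Semiring R] (f : ℕ × ℕ → R) (i j : ℕ) :
    (∑ ij ∈ antidiagonal (i + j), monomial ij.1 (f ij)).coeff i = f (i, j) := by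
  rw [finsetSum_coeff, sum_eq_single_of_mem (i, j) (by simp)]
  · exact coeff_monomial_same i _
  · rintro ⟨i', j'⟩ hmem hne
    refine coeff_monomial_of_ne _ ?_
    grind [HasAntidiagonal.mem_antidiagonal]

theorem coeff_C_mul_X_add_C_pow (a b : A) (i j : ℕ) :
    ((C a * X + C b) ^ (i + j)).coeff i = SH a b i j := by
  simp only [add_pow_eq_sum_SH, SH_C_mul_X, coeff_sum_antidiagonal_monomial]

theorem add_pow_add_two_eq (a b : A) (n : ℕ) :
    (a + b) ^ (n + 2) =
      a ^ (n + 2) + b ^ (n + 2) + ∑ ij ∈ antidiagonal n, SH a b (ij.1 + 1) (ij.2 + 1) := by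
  rw [add_pow_eq_sum_SH, Finset.Nat.sum_antidiagonal_succ, Finset.Nat.sum_antidiagonal_succ',
    SH_zero_left, SH_zero_right]
  abel

end Shuffle

section Jacobson

open Finset Polynomial

section Ring

variable {R : Type*} [Ring R] {p : ℕ}

theorem natCast_choose_pred_of_prime (hp : p.Prime) (hpR : (p : R) = 0) {i : ℕ} (hi : i < p) :
    ((p - 1).choose i : R) = (-1) ^ i := by
  obtain ⟨q, rfl⟩ := Nat.exists_eq_add_one.2 hp.pos
  induction i with
  | zero => simp
  | succ i ih =>
    have hsum : (q.choose i : R) + q.choose (i + 1) = 0 := by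
      obtain ⟨c, hc⟩ := hp.dvd_choose_self i.succ_ne_zero hi
      rw [← Nat.cast_add, ← Nat.choose_succ_succ, hc, Nat.cast_mul, hpR, zero_mul]
    rw [Nat.add_sub_cancel] at ih ⊢
    rw [eq_neg_of_add_eq_zero_right hsum, ih (by omega), pow_succ, mul_neg_one]

theorem sub_pow_pred_of_commute (hp : p.Prime) (hpR : (p : R) = 0) {x y : R} (h : Commute x y) :
    (x - y) ^ (p - 1) = ∑ i ∈ range p, x ^ i * y ^ (p - 1 - i) := by
  rw [sub_eq_add_neg, h.neg_right.add_pow, Nat.sub_add_cancel hp.one_le]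
  refine sum_congr rfl fun i hi => ?_
  have hi : i ≤ p - 1 := Nat.le_sub_one_of_lt (mem_range.1 hi)
  have hchoose : ((p - 1).choose i : R) = (-1) ^ (p - 1 - i) := by
    rw [← Nat.choose_symm hi]
    exact natCast_choose_pred_of_prime hp hpR (by have := hp.pos; omega)
  rw [hchoose, neg_pow y, mul_assoc, ((Commute.neg_one_left _).pow_left _).eq, mul_assoc,
    ← pow_add, Even.neg_one_pow ⟨_, rfl⟩, mul_one]

theorem derivative_pow_eq_sum (f : R[X]) (n : ℕ) :
    derivative (f ^ n) = ∑ i ∈ range n, f ^ i * derivative f * f ^ (n - 1 - i) := by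
  induction n with
  | zero => simp
  | succ n ih =>
    rw [pow_succ, derivative_mul, ih, sum_range_succ, sum_mul]
    simp only [Nat.add_sub_cancel, Nat.sub_self, pow_zero, mul_one]
    congr 1
    refine sum_congr rfl fun i hi => ?_
    rw [mul_assoc, ← pow_succ, tsub_right_comm, Nat.sub_add_cancel]
    have := mem_range.1 hi
    omega

end Ring

section Ad

attribute [local instance] LieRing.ofAssociativeRing

variable {k A : Type*} [CommRing k] [Ring A] [Algebra k A]

theorem derivative_pow_char {p : ℕ} (hp : p.Prime) [CharP k p] (f : A[X]) :
    derivative (f ^ p) = (LieAlgebra.ad k A[X] f ^ (p - 1)) (derivative f) := by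
  have hp0 : (p : Module.End k A[X]) = 0 := by
    rw [← map_natCast (algebraMap k _), CharP.cast_eq_zero, map_zero]
  rw [LieAlgebra.ad_eq_lmul_left_sub_lmul_right, Pi.sub_apply,
    sub_pow_pred_of_commute hp hp0 (LinearMap.commute_mulLeft_right f f), derivative_pow_eq_sum,
    LinearMap.sum_apply]
  refine sum_congr rfl fun i _ => ?_
  rw [LinearMap.pow_mulLeft, LinearMap.pow_mulRight]
  simp [mul_assoc]

theorem SH_ad_C_mul_X_apply_C (a b c : A) (i j : ℕ) :
    SH (LieAlgebra.ad k A[X] (C a * X)) (LieAlgebra.ad k A[X] (C b)) i j (C c) =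
      monomial i (SH (LieAlgebra.ad k A a) (LieAlgebra.ad k A b) i j c) := by
  have lie_monomial (n : ℕ) (x : A) : ⁅C b, monomial n x⁆ = monomial n ⁅b, x⁆ := by
    simp [Ring.lie_def, C_mul_monomial, monomial_mul_C]
  have lie_monomial_succ (n : ℕ) (x : A) :
      ⁅C a * X, monomial n x⁆ = monomial (n + 1) ⁅a, x⁆ := by
    rw [C_mul_X_eq_monomial]
    simp [Ring.lie_def, monomial_mul_monomial, add_comm]
  induction i, j using SH.induct with
  | case1 => simp [SH]
  | case2 i ih => simp [SH, ih, lie_monomial_succ]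
  | case3 j ih => simp only [SH, Module.End.mul_apply, ih, LieAlgebra.ad_apply, lie_monomial]
  | case4 i j ih₁ ih₂ => simp [SH, ih₁, ih₂, lie_monomial, lie_monomial_succ]

theorem coeff_ad_pow_apply_C (a b c : A) (i j : ℕ) :
    ((LieAlgebra.ad k A[X] (C a * X + C b) ^ (i + j)) (C c)).coeff i =
      SH (LieAlgebra.ad k A a) (LieAlgebra.ad k A b) i j c := by
  rw [map_add, add_pow_eq_sum_SH, LinearMap.sum_apply]
  simp only [SH_ad_C_mul_X_apply_C]
  exact coeff_sum_antidiagonal_monomial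
    (fun ij => SH (LieAlgebra.ad k A a) (LieAlgebra.ad k A b) ij.1 ij.2 c) i j

theorem succ_smul_SH_eq_SH_ad {p : ℕ} (hp : p.Prime) [CharP k p] (a b : A) {i j : ℕ}
    (hij : i + 1 + j = p) :
    (i + 1) • SH a b (i + 1) j = SH (LieAlgebra.ad k A a) (LieAlgebra.ad k A b) i j a := by
  have hpred : p - 1 = i + j := by omega
  calc (i + 1) • SH a b (i + 1) j
      = (derivative ((C a * X + C b) ^ p)).coeff i := by
        rw [coeff_derivative, ← hij, coeff_C_mul_X_add_C_pow, nsmul_eq_mul', Nat.cast_succ]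
    _ = ((LieAlgebra.ad k A[X] (C a * X + C b) ^ (i + j)) (C a)).coeff i := by
        rw [derivative_pow_char (k := k) hp, hpred]
        simp
    _ = _ := coeff_ad_pow_apply_C a b a i j

end Ad

end Jacobson

section LyndonShirshov

attribute [local instance] LieRing.ofAssociativeRing

variable {k A X : Type*} [CommRing k] [Ring A] [Algebra k A] [LinearOrder X] {E : List X → A}

theorem SH_ad_apply_mem_lyndonSpan (hE : IsLyndonShirshov E) (x y : X) (i j : ℕ) :
    SH (LieAlgebra.ad k A (E [y])) (LieAlgebra.ad k A (E [x])) i j (E [y]) ∈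
      lyndonSpan k E {α | α.Perm (List.replicate (i + 1) y ++ List.replicate j x)} := by
  have lie_mem (z : X) {t : A} {w w' : List X} (ht : t ∈ lyndonSpan k E {α | α.Perm w})
      (hw : (z :: w).Perm w') : ⁅E [z], t⁆ ∈ lyndonSpan k E {α | α.Perm w'} :=
    lyndonSpan_mono (fun _ hα => hα.trans hw)
      ((isLyndon_singleton z).lie_mem_lyndonSpan_of_mem hE ht)
  induction i, j using SH.induct with
  | case1 =>
    rw [SH]
    exact (isLyndon_singleton y).mem_lyndonSpan (List.Perm.refl _)
  | case2 i ih =>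
    rw [SH]
    exact lie_mem y ih (List.Perm.refl _)
  | case3 j ih =>
    rw [SH]
    exact lie_mem x ih List.perm_middle.symm
  | case4 i j ih₁ ih₂ =>
    rw [SH]
    exact add_mem (lie_mem y ih₁ (List.Perm.refl _)) (lie_mem x ih₂ List.perm_middle.symm)

theorem SH_mem_lyndonSpan {p : ℕ} (hp : p.Prime) [CharP k p] (hE : IsLyndonShirshov E)
    (x y : X) {m : ℕ} (hm : 1 ≤ m) (hmp : m ≤ p - 1) :
    SH (E [y]) (E [x]) m (p - m) ∈
      lyndonSpan k E {α | α.Perm (List.replicate m y ++ List.replicate (p - m) x)} := by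
  obtain ⟨i, rfl⟩ := Nat.exists_eq_add_one.2 hm
  have hpos := hp.pos
  have hunit : IsUnit ((i + 1 : ℕ) : k) :=
    (CharP.isUnit_natCast_iff hp).2 (Nat.not_dvd_of_pos_of_lt i.succ_pos (by omega))
  rw [← Submodule.smul_mem_iff_of_isUnit _ hunit, Nat.cast_smul_eq_nsmul,
    succ_smul_SH_eq_SH_ad (k := k) hp (E [y]) (E [x]) (by omega)]
  exact SH_ad_apply_mem_lyndonSpan hE x y i (p - (i + 1))

theorem add_pow_sub_pow_sub_pow_mem_lyndonSpan {p : ℕ} (hp : p.Prime) [CharP k p]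
    (hE : IsLyndonShirshov E) (x y : X) :
    (E [x] + E [y]) ^ p - E [x] ^ p - E [y] ^ p ∈ lyndonSpan k E {α | α.length = p} := by
  obtain ⟨n, rfl⟩ := Nat.exists_eq_add_of_le' hp.two_le
  have hsum : (E [x] + E [y]) ^ (n + 2) - E [x] ^ (n + 2) - E [y] ^ (n + 2) =
      ∑ ij ∈ Finset.HasAntidiagonal.antidiagonal n, SH (E [y]) (E [x]) (ij.1 + 1) (ij.2 + 1) := by
    rw [add_comm (E [x]), add_pow_add_two_eq]
    abel
  rw [hsum]
  refine sum_mem fun ij hij => ?_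
  have hij : ij.1 + ij.2 = n := Finset.HasAntidiagonal.mem_antidiagonal.1 hij
  have hj : n + 2 - (ij.1 + 1) = ij.2 + 1 := by omega
  refine lyndonSpan_mono (fun α hα => ?_)
    (hj ▸ SH_mem_lyndonSpan hp hE x y (Nat.le_add_left 1 ij.1) (by omega))
  have hlen : α.length = ij.1 + 1 + (ij.2 + 1) := by simpa using hα.length_eq
  exact hlen.trans (by omega)

end LyndonShirshov

theorem stmt_7_general {k A X : Type*} [CommRing k] [Ring A] [Algebra k A] [LinearOrder X]
    {p : ℕ} (hp : p.Prime) [CharP k p] {E : List X → A} (hE : IsLyndonShirshov E) (x y : X) :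
    (∀ m : ℕ, 1 ≤ m → m ≤ p - 1 → SH (E [y]) (E [x]) m (p - m) ∈
      lyndonSpan k E {α | α.Perm (List.replicate m y ++ List.replicate (p - m) x)}) ∧
    (E [x] + E [y]) ^ p - E [x] ^ p - E [y] ^ p ∈ lyndonSpan k E {α | α.length = p} :=
  ⟨fun _ hm hmp => SH_mem_lyndonSpan hp hE x y hm hmp,
    add_pow_sub_pow_sub_pow_mem_lyndonSpan hp hE x y⟩

/-- In characteristic `p`: each middle shuffle type polynomial lies in the span of
Lyndon–Shirshov basis elements of the corresponding multidegree, and consequently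
`(E₁+E₂)^p − E₁^p − E₂^p` lies in the span of the `E(α)` with `|α| = p`.
Alphabet is `Fin 2`, letter `1` is `0` and letter `2` is `1`. -/
theorem stmt_7 (k : Type*) [Field k] (p : ℕ) (hp : p.Prime) [CharP k p]
    (E : List (Fin 2) → FreeAlgebra k (Fin 2))
    (hE1 : ∀ x : Fin 2, E [x] = FreeAlgebra.ι k x)
    (hE2 : ∀ αL αR : List (Fin 2), IsLyndon (αL ++ αR) → αL ≠ [] → IsLyndon αR →
      (∀ δ β' : List (Fin 2), αL ++ αR = β' ++ δ → β' ≠ [] → IsLyndon δ →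
        δ.length ≤ αR.length) →
      E (αL ++ αR) = E αL * E αR - E αR * E αL) :
    (∀ m : ℕ, 1 ≤ m → m ≤ p - 1 →
      SH (E [1]) (E [0]) m (p - m) ∈ Submodule.span k
        {a : FreeAlgebra k (Fin 2) | ∃ α : List (Fin 2),
          IsLyndon α ∧ α.count 1 = m ∧ α.count 0 = p - m ∧ a = E α}) ∧
    (E [0] + E [1]) ^ p - E [0] ^ p - E [1] ^ p ∈ Submodule.span k
      {a : FreeAlgebra k (Fin 2) | ∃ α : List (Fin 2),
        IsLyndon α ∧ α.length = p ∧ a = E α} := by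
  have hE : IsLyndonShirshov E := fun l r h hlr => hE2 l r h hlr.1 hlr.2.1 hlr.2.2
  have subset_letters (α : List (Fin 2)) : α ⊆ [1, 0] := fun z _ => by fin_cases z <;> simp
  simpa [lyndonSpan, List.perm_replicate_append_replicate, subset_letters, and_assoc] using
    stmt_7_general (k := k) hp hE (0 : Fin 2) 1
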